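/- (Carleson) Let {λ_i}_{i=1}^∞ be a sequence of distinct points in 𝔻. The following are equivalent: (1) there exists ε > 0 such that for every i, ∏_{j ≠ i} ρ(λ_i, λ_j) ≥ ε; (2) the sequence is interpolating for H^∞(𝔻), i.e. for every bounded sequence {w_i} of complex numbers there is a bounded analytic function φ on 𝔻 with φ(λ_i) = w_i for all i; (3) the sequence is weakly separated (there exists ε > 0 with ρ(λ_i, λ_j) ≥ ε for all i ≠ j) and the Szegő Grammian G, with entries G_{ij} = (1 − |λ_i|²)^{1/2}(1 − |λ_j|²)^{1/2}/(1 − λ_i λ̄_j), is bounded on ℓ², i.e. there is M > 0 with |∑_{i,j} a_i ā_j G_{ij}| ≤ M ∑_i |a_i|² for every finitely supported complex sequence {a_i}. -/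

import Mathlib

open Metric Finset

/-- The pseudohyperbolic metric on the unit disk: `ρ(a,b) = |a - b| / |1 - āb|`. -/
noncomputable def pseudoHyp (a b : ℂ) : ℝ := ‖a - b‖ / ‖1 - starRingEnd ℂ a * b‖

/-! (2) ⇒ (1): by the open mapping theorem, interpolation can be done with a uniform bound `M`. A
function with `φ(λᵢ) = 1` that vanishes at the other points can be divided by the corresponding
Blaschke factors without increasing its bound (Schwarz's lemma), so that
`1 ≤ M ∏_{j ≠ i} ρ(λᵢ, λⱼ)`.

(1) ⇒ (2): P. Jones's formula interpolates on finitely many points. In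
`∑ⱼ wⱼ (Bⱼ(z) / Bⱼ(λⱼ)) ((1 - |λⱼ|²) / (1 - λ̄ⱼz))² exp(∑_{|λₖ| ≥ |λⱼ|} (Hₖ(λⱼ) - Hₖ(z)))`
the Blaschke products `Bⱼ` carry the zeros, and the Herglotz kernels `Hₖ` make the absolute values
of the terms sum to at most a constant multiple of a lower Riemann sum of `∫₀^∞ e⁻ᵗ dt`. Normal
families pass from finite to infinite sets of points.

(2) ⇒ (3): choose signs `sᵢ` for which the Grammian form at `(sᵢ aᵢ)` is at most its diagonal part
`∑ |aᵢ|²`, and interpolate the signs by a function bounded by `M`. As `sᵢ² = 1`, Pick's inequality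
bounds the form at `a` by `M²` times the form at `(sᵢ aᵢ)`.

(3) ⇒ (1): the rows of a bounded matrix are bounded in `ℓ²`, and `|Gᵢⱼ|² = 1 - ρ(λᵢ, λⱼ)²`, so
`∑ⱼ (1 - ρ(λᵢ, λⱼ)²)` is bounded. For factors bounded away from `0` this bounds the product below.
-/

open Filter Topology ComplexConjugate BoundedContinuousFunction

section NormalFamilies

theorem exists_tendsto_ultrafilter_of_norm_le {α E : Type*} [SeminormedAddCommGroup E]
    [ProperSpace E] {C : ℝ} (u : Ultrafilter α) {x : α → E}
    (hx : ∀ n, ‖x n‖ ≤ C) : ∃ y, Tendsto x u (𝓝 y) := by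
  have hmem : ∀ᶠ n in (u : Filter α), x n ∈ closedBall 0 C :=
    Eventually.of_forall fun n ↦ mem_closedBall_zero_iff.mpr (hx n)
  obtain ⟨y, -, hy⟩ :=
    (isCompact_closedBall (0 : E) C).ultrafilter_le_nhds (u.map x) (le_principal_iff.mpr hmem)
  exact ⟨y, hy⟩

variable {α E : Type*} [NormedAddCommGroup E] [NormedSpace ℂ E] {U : Set ℂ} {C : ℝ}
  {f : α → ℂ → E}

theorem equicontinuousOn_of_differentiableOn_of_norm_le (hU : IsOpen U)
    (hd : ∀ n, DifferentiableOn ℂ (f n) U) (hb : ∀ n, ∀ z ∈ U, ‖f n z‖ ≤ C) :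
    EquicontinuousOn f U := by
  intro z₀ hz₀
  obtain ⟨r, hr, hsub⟩ := Metric.isOpen_iff.mp hU z₀ hz₀
  refine (Metric.equicontinuousAt_of_continuity_modulus (fun z ↦ (C + C) / r * dist z z₀)
    ?_ f ?_).equicontinuousWithinAt U
  · have hcont : Continuous fun z ↦ (C + C) / r * dist z z₀ := by fun_prop
    simpa using hcont.tendsto z₀
  · filter_upwards [ball_mem_nhds z₀ hr] with z hz n
    rw [dist_comm]
    refine Complex.dist_le_div_mul_dist_of_mapsTo_ball ((hd n).mono hsub) (fun w hw ↦ ?_) hz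
    exact (dist_le_norm_add_norm _ _).trans (add_le_add (hb n w (hsub hw)) (hb n z₀ hz₀))

theorem exists_tendstoLocallyUniformlyOn_of_norm_le [ProperSpace E] (hU : IsOpen U)
    (hd : ∀ n, DifferentiableOn ℂ (f n) U) (hb : ∀ n, ∀ z ∈ U, ‖f n z‖ ≤ C)
    (u : Ultrafilter α) : ∃ g, TendstoLocallyUniformlyOn f g u U := by
  have hlim : ∀ z : U, ∃ y, Tendsto (f · z) u (𝓝 y) := fun z ↦
    exists_tendsto_ultrafilter_of_norm_le u (hb · z z.2)
  choose g hg using hlim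
  refine ⟨Function.extend (↑) g 0, (tendstoLocallyUniformlyOn_iff_forall_isCompact hU).mpr ?_⟩
  intro K hKU hK
  have hequi := (equicontinuousOn_of_differentiableOn_of_norm_le hU hd hb).mono hKU
  have h := EquicontinuousOn.tendsto_uniformOnFun_iff_pi' (𝔖 := {K}) (by simpa using hK)
    (by simpa using hequi) (u : Filter α) (Function.extend ((↑) : U → ℂ) g 0)
  rw [UniformOnFun.tendsto_iff_tendstoUniformlyOn] at h
  refine h.mpr (tendsto_pi_nhds.mpr fun z ↦ ?_) K rfl
  have hz : (z : ℂ) ∈ U := hKU (by simpa using z.2)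
  have := hg ⟨z, hz⟩
  simpa [Subtype.val_injective.extend_apply g 0 ⟨z, hz⟩] using this

theorem exists_interpolating_of_forall_finset {ι : Type*} (hU : IsOpen U) {lam w : ι → ℂ}
    (hlam : ∀ i, lam i ∈ U)
    (h : ∀ F : Finset ι, ∃ φ : ℂ → ℂ, DifferentiableOn ℂ φ U ∧ (∀ z ∈ U, ‖φ z‖ ≤ C) ∧
      ∀ i ∈ F, φ (lam i) = w i) :
    ∃ φ : ℂ → ℂ, DifferentiableOn ℂ φ U ∧ (∀ z ∈ U, ‖φ z‖ ≤ C) ∧ ∀ i, φ (lam i) = w i := by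
  choose φ hd hb hφ using h
  let u : Ultrafilter (Finset ι) := Ultrafilter.of atTop
  obtain ⟨g, hg⟩ := exists_tendstoLocallyUniformlyOn_of_norm_le hU hd hb u
  refine ⟨g, hg.differentiableOn (Eventually.of_forall hd) hU, fun z hz ↦ ?_, fun i ↦ ?_⟩
  · exact le_of_tendsto (hg.tendsto_at hz).norm (Eventually.of_forall fun F ↦ hb F z hz)
  · have hconst : ∀ᶠ F in (u : Filter (Finset ι)), φ F (lam i) = w i :=
      Ultrafilter.of_le atTop <| (eventually_ge_atTop {i}).mono fun F hF ↦
        hφ F i (Finset.singleton_subset_iff.mp hF)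
    exact tendsto_nhds_unique (hg.tendsto_at (hlam i))
      (tendsto_const_nhds.congr' (hconst.mono fun _ ↦ Eq.symm))

end NormalFamilies

section Interpolating

variable {ι : Type*} {U : Set ℂ} {lam : ι → ℂ}

/-- A family of points is interpolating for `H^∞(U)` if every bounded family of values is attained
on it by a bounded analytic function on `U`. -/
def IsInterpolating (U : Set ℂ) (lam : ι → ℂ) : Prop :=
  ∀ w : ι → ℂ, (∃ Cw : ℝ, ∀ i, ‖w i‖ ≤ Cw) →
    ∃ φ : ℂ → ℂ, DifferentiableOn ℂ φ U ∧ (∃ Cφ : ℝ, ∀ z ∈ U, ‖φ z‖ ≤ Cφ) ∧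
      ∀ i, φ (lam i) = w i

theorem IsInterpolating.injective (h : IsInterpolating U lam) : Function.Injective lam := by
  classical
  intro i j hij
  obtain ⟨φ, -, -, hφ⟩ := h (Pi.single j 1) ⟨1, fun k ↦ by
    rcases eq_or_ne k j with rfl | hk <;> simp [*]⟩
  have hφij : (Pi.single j 1 : ι → ℂ) i = 1 := by rw [← hφ, hij, hφ, Pi.single_eq_same]
  by_contra hne
  simp [hne] at hφij

/-- The space `H^∞(U)`, as a subspace of the bounded continuous functions on `U`; analyticity is
tested on the extension by zero. -/
noncomputable def boundedAnalytic (U : Set ℂ) : Submodule ℂ (U →ᵇ ℂ) where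
  carrier := {f | DifferentiableOn ℂ (Function.extend (↑) f 0) U}
  add_mem' hf hg := (hf.add hg).congr fun z hz ↦ by
    lift z to U using hz
    simp
  zero_mem' := (differentiableOn_const (0 : ℂ)).congr fun z hz ↦ by
    lift z to U using hz
    simp
  smul_mem' c f hf := (hf.const_smul c).congr fun z hz ↦ by
    lift z to U using hz
    simp

theorem isClosed_boundedAnalytic (hU : IsOpen U) : IsClosed (boundedAnalytic U : Set (U →ᵇ ℂ)) := by
  refine IsSeqClosed.isClosed fun f g hf hfg ↦ ?_
  have hunif : TendstoUniformlyOn (fun n ↦ Function.extend (↑) (f n) 0)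
      (Function.extend (↑) g 0) atTop U := by
    rw [tendstoUniformlyOn_iff_tendstoUniformly_comp_coe]
    simpa only [Function.comp_def, Subtype.val_injective.extend_apply] using
      BoundedContinuousFunction.tendsto_iff_tendstoUniformly.mp hfg
  exact hunif.tendstoLocallyUniformlyOn.differentiableOn (Eventually.of_forall hf) hU

theorem exists_mem_boundedAnalytic {φ : ℂ → ℂ} {C : ℝ} (hd : DifferentiableOn ℂ φ U)
    (hb : ∀ z ∈ U, ‖φ z‖ ≤ C) : ∃ f ∈ boundedAnalytic U, ∀ z : U, f z = φ z := by
  refine ⟨.ofNormedAddCommGroup (fun z ↦ φ z) hd.continuousOn.domRestrict C fun z ↦ hb z z.2,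
    hd.congr fun z hz ↦ ?_, fun z ↦ rfl⟩
  lift z to U using hz
  exact Subtype.val_injective.extend_apply _ _ z

theorem IsInterpolating.exists_uniform_bound (hU : IsOpen U) (hlam : ∀ i, lam i ∈ U)
    (h : IsInterpolating U lam) :
    ∃ M : ℝ, ∀ w : ι → ℂ, (∀ i, ‖w i‖ ≤ 1) → ∃ φ : ℂ → ℂ, DifferentiableOn ℂ φ U ∧
      (∀ z ∈ U, ‖φ z‖ ≤ M) ∧ ∀ i, φ (lam i) = w i := by
  let _ : TopologicalSpace ι := ⊥
  have : DiscreteTopology ι := ⟨rfl⟩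
  have : CompleteSpace (boundedAnalytic U) := (isClosed_boundedAnalytic hU).completeSpace_coe
  let restrict : boundedAnalytic U →L[ℂ] (ι →ᵇ ℂ) :=
    (compContinuousCLM ℂ ℂ ⟨fun i ↦ (⟨lam i, hlam i⟩ : U), continuous_of_discreteTopology⟩).comp
      (boundedAnalytic U).subtypeL
  have hsurj : Function.Surjective restrict := by
    intro w
    obtain ⟨φ, hd, ⟨C, hC⟩, hφ⟩ := h w ⟨‖w‖, w.norm_coe_le_norm⟩
    obtain ⟨f, hf, hfφ⟩ := exists_mem_boundedAnalytic hd hC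
    exact ⟨⟨f, hf⟩, BoundedContinuousFunction.ext fun i ↦ (hfφ _).trans (hφ i)⟩
  obtain ⟨M, hM, hpre⟩ := restrict.exists_preimage_norm_le hsurj
  refine ⟨M, fun w hw ↦ ?_⟩
  let w' : ι →ᵇ ℂ := .ofNormedAddCommGroup w continuous_of_discreteTopology 1 hw
  obtain ⟨f, hfw, hf⟩ := hpre w'
  refine ⟨Function.extend ((↑) : U → ℂ) f.1 0, f.2, fun z hz ↦ ?_, fun i ↦ ?_⟩
  · lift z to U using hz
    rw [Subtype.val_injective.extend_apply]
    calc ‖f.1 z‖ ≤ ‖f‖ := f.1.norm_coe_le_norm z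
      _ ≤ M * ‖w'‖ := hf
      _ ≤ M := mul_le_of_le_one_right hM.le (norm_ofNormedAddCommGroup_le _ zero_le_one hw)
  · have hext := Subtype.val_injective.extend_apply f.1 0 (⟨lam i, hlam i⟩ : U)
    exact hext.trans (DFunLike.congr_fun hfw i)

end Interpolating

section Disc

variable {a b z : ℂ}

theorem one_sub_conj_mul_ne_zero (ha : ‖a‖ < 1) (hz : ‖z‖ ≤ 1) : 1 - conj a * z ≠ 0 := by
  refine sub_ne_zero_of_ne fun h ↦ ?_
  have : ‖conj a * z‖ < 1 := by
    rw [norm_mul, Complex.norm_conj]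
    exact mul_lt_one_of_nonneg_of_lt_one_left (norm_nonneg a) ha hz
  simp [← h] at this

theorem norm_one_sub_conj_mul_comm (a z : ℂ) : ‖1 - conj a * z‖ = ‖1 - conj z * a‖ := by
  rw [← Complex.norm_conj]
  simp [mul_comm]

theorem one_sub_sq_norm_pos (ha : ‖a‖ < 1) : 0 < 1 - ‖a‖ ^ 2 :=
  sub_pos.mpr (pow_lt_one₀ (norm_nonneg a) ha two_ne_zero)

theorem ofReal_one_sub_sq_norm (a : ℂ) : ((1 - ‖a‖ ^ 2 : ℝ) : ℂ) = 1 - conj a * a := by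
  rw [Complex.conj_mul']
  push_cast
  rfl

theorem sq_norm_one_sub_conj_mul_sub_sq_norm_sub (a z : ℂ) :
    ‖1 - conj a * z‖ ^ 2 - ‖a - z‖ ^ 2 = (1 - ‖a‖ ^ 2) * (1 - ‖z‖ ^ 2) := by
  simp only [Complex.sq_norm, Complex.normSq_apply, Complex.sub_re, Complex.sub_im, Complex.one_re,
    Complex.one_im, Complex.mul_re, Complex.mul_im, Complex.conj_re, Complex.conj_im]
  ring

/-- The disc automorphism exchanging `a` and `0`, normalised to be an involution. -/
noncomputable def blaschkeFactor (a z : ℂ) : ℂ := (a - z) / (1 - conj a * z)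

theorem blaschkeFactor_self (a : ℂ) : blaschkeFactor a a = 0 := by simp [blaschkeFactor]

theorem blaschkeFactor_zero (a : ℂ) : blaschkeFactor a 0 = a := by simp [blaschkeFactor]

theorem norm_blaschkeFactor (a z : ℂ) : ‖blaschkeFactor a z‖ = pseudoHyp z a := by
  rw [blaschkeFactor, pseudoHyp, norm_div, norm_sub_rev, norm_one_sub_conj_mul_comm]

theorem pseudoHyp_nonneg (a b : ℂ) : 0 ≤ pseudoHyp a b := by
  unfold pseudoHyp
  positivity

theorem one_sub_pseudoHyp_sq (ha : ‖a‖ < 1) (hb : ‖b‖ ≤ 1) :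
    1 - pseudoHyp a b ^ 2 = (1 - ‖a‖ ^ 2) * (1 - ‖b‖ ^ 2) / ‖1 - conj a * b‖ ^ 2 := by
  have h : ‖1 - conj a * b‖ ^ 2 ≠ 0 :=
    pow_ne_zero 2 (norm_ne_zero_iff.mpr (one_sub_conj_mul_ne_zero ha hb))
  rw [pseudoHyp, ← sq_norm_one_sub_conj_mul_sub_sq_norm_sub, sub_div, div_self h, div_pow]

theorem pseudoHyp_lt_one (ha : ‖a‖ < 1) (hb : ‖b‖ < 1) : pseudoHyp a b < 1 := by
  have h : 0 < 1 - pseudoHyp a b ^ 2 := by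
    rw [one_sub_pseudoHyp_sq ha hb.le]
    exact div_pos (mul_pos (one_sub_sq_norm_pos ha) (one_sub_sq_norm_pos hb))
      (pow_pos (norm_pos_iff.mpr (one_sub_conj_mul_ne_zero ha hb.le)) 2)
  exact (sq_lt_one_iff₀ (pseudoHyp_nonneg a b)).mp (sub_pos.mp h)

theorem mapsTo_blaschkeFactor (ha : ‖a‖ < 1) :
    Set.MapsTo (blaschkeFactor a) (ball 0 1) (ball 0 1) := fun z hz ↦ by
  rw [mem_ball_zero_iff] at hz ⊢
  exact (norm_blaschkeFactor a z).trans_lt (pseudoHyp_lt_one hz ha)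

theorem blaschkeFactor_blaschkeFactor (ha : ‖a‖ < 1) (hz : ‖z‖ < 1) :
    blaschkeFactor a (blaschkeFactor a z) = z := by
  have hz' := one_sub_conj_mul_ne_zero ha hz.le
  have ha' := one_sub_conj_mul_ne_zero ha ha.le
  have hnum : a - blaschkeFactor a z = z * (1 - conj a * a) / (1 - conj a * z) := by
    rw [blaschkeFactor, eq_div_iff hz', sub_mul, div_mul_cancel₀ _ hz']
    ring
  have hden : 1 - conj a * blaschkeFactor a z = (1 - conj a * a) / (1 - conj a * z) := by
    rw [blaschkeFactor, eq_div_iff hz', sub_mul, mul_assoc, div_mul_cancel₀ _ hz']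
    ring
  rw [blaschkeFactor, hnum, hden, div_div_div_cancel_right₀ hz', mul_div_cancel_right₀ _ ha']

theorem blaschkeFactor_ne_zero (ha : ‖a‖ < 1) (hz : ‖z‖ ≤ 1) (h : a ≠ z) :
    blaschkeFactor a z ≠ 0 :=
  div_ne_zero (sub_ne_zero.mpr h) (one_sub_conj_mul_ne_zero ha hz)

theorem differentiableOn_blaschkeFactor (ha : ‖a‖ < 1) :
    DifferentiableOn ℂ (blaschkeFactor a) (ball 0 1) :=
  DifferentiableOn.fun_div (by fun_prop) (by fun_prop) fun _ hz ↦
    one_sub_conj_mul_ne_zero ha (mem_ball_zero_iff.mp hz).le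

/-- The normalised Szegő kernel `⟨k_b, k_a⟩ / (‖k_a‖ ‖k_b‖)`, whose values are the entries of the
Szegő Grammian. -/
noncomputable def szegoGram (a b : ℂ) : ℂ :=
  (√(1 - ‖a‖ ^ 2) * √(1 - ‖b‖ ^ 2) : ℝ) / (1 - a * conj b)

theorem conj_szegoGram (a b : ℂ) : conj (szegoGram a b) = szegoGram b a := by
  simp only [szegoGram, map_div₀, Complex.conj_ofReal, map_sub, map_one, map_mul, Complex.conj_conj,
    mul_comm]

theorem szegoGram_self (ha : ‖a‖ < 1) : szegoGram a a = 1 := by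
  have h := one_sub_conj_mul_ne_zero ha ha.le
  rw [szegoGram, Real.mul_self_sqrt (one_sub_sq_norm_pos ha).le, ofReal_one_sub_sq_norm,
    mul_comm a, div_self h]

theorem sq_norm_szegoGram (ha : ‖a‖ < 1) (hb : ‖b‖ < 1) :
    ‖szegoGram a b‖ ^ 2 = (1 - ‖a‖ ^ 2) * (1 - ‖b‖ ^ 2) / ‖1 - conj a * b‖ ^ 2 := by
  rw [szegoGram, norm_div, Complex.norm_real, Real.norm_of_nonneg (by positivity), div_pow,
    mul_pow, Real.sq_sqrt (one_sub_sq_norm_pos ha).le, Real.sq_sqrt (one_sub_sq_norm_pos hb).le,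
    norm_one_sub_conj_mul_comm, mul_comm a]

theorem sq_norm_szegoGram_eq_one_sub (ha : ‖a‖ < 1) (hb : ‖b‖ < 1) :
    ‖szegoGram a b‖ ^ 2 = 1 - pseudoHyp a b ^ 2 := by
  rw [sq_norm_szegoGram ha hb, one_sub_pseudoHyp_sq ha hb.le]

end Disc

section Separation

variable {ι : Type*} {lam : ι → ℂ}

/-- Condition (1): the products `∏_{j ≠ i} ρ(λᵢ, λⱼ)` are bounded below, uniformly in `i`. As all
factors are at most `1`, the infinite product is encoded by its finite partial products. -/
def UniformlySeparated (lam : ι → ℂ) : Prop :=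
  ∃ ε > (0 : ℝ), ∀ i, ∀ F : Finset ι, i ∉ F → ε ≤ ∏ j ∈ F, pseudoHyp (lam i) (lam j)

/-- The first half of condition (3): distinct indices give points at pseudohyperbolic distance
bounded below. -/
def WeaklySeparated (lam : ι → ℂ) : Prop :=
  ∃ ε > (0 : ℝ), ∀ i j, i ≠ j → ε ≤ pseudoHyp (lam i) (lam j)

theorem UniformlySeparated.weaklySeparated (h : UniformlySeparated lam) : WeaklySeparated lam := by
  obtain ⟨ε, hε, h⟩ := h
  exact ⟨ε, hε, fun i j hij ↦ by simpa using h i {j} (by simpa using hij)⟩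

theorem WeaklySeparated.injective (h : WeaklySeparated lam) : Function.Injective lam := by
  obtain ⟨ε, hε, h⟩ := h
  intro i j hij
  by_contra hne
  have hself : pseudoHyp (lam j) (lam j) = 0 := by simp [pseudoHyp]
  exact (h i j hne).not_gt (by rwa [hij, hself])

end Separation

section SchwarzLemma

variable {h : ℂ → ℂ} {M : ℝ} {a : ℂ}

/-- Schwarz's lemma, with the zero moved to the origin by the automorphism `blaschkeFactor a`. -/
theorem exists_eq_blaschkeFactor_mul (hd : DifferentiableOn ℂ h (ball 0 1))
    (hb : ∀ z ∈ ball (0 : ℂ) 1, ‖h z‖ ≤ M) (ha : ‖a‖ < 1) (hzero : h a = 0) :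
    ∃ g : ℂ → ℂ, DifferentiableOn ℂ g (ball 0 1) ∧ (∀ z ∈ ball (0 : ℂ) 1, ‖g z‖ ≤ M) ∧
      ∀ z ∈ ball (0 : ℂ) 1, h z = blaschkeFactor a z * g z := by
  have hmaps := mapsTo_blaschkeFactor ha
  have hdiff := differentiableOn_blaschkeFactor ha
  let f : ℂ → ℂ := h ∘ blaschkeFactor a
  have hfd : DifferentiableOn ℂ f (ball 0 1) := hd.comp hdiff hmaps
  have hf0 : f 0 = 0 := by
    rw [show f 0 = h (blaschkeFactor a 0) from rfl, blaschkeFactor_zero, hzero]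
  have hfm : Set.MapsTo f (ball 0 1) (closedBall (f 0) M) := fun w hw ↦ by
    rw [hf0, mem_closedBall_zero_iff]
    exact hb _ (hmaps hw)
  refine ⟨dslope f 0 ∘ blaschkeFactor a, ?_, fun z hz ↦ ?_, fun z hz ↦ ?_⟩
  · exact ((Complex.differentiableOn_dslope (ball_mem_nhds 0 one_pos)).mpr hfd).comp hdiff hmaps
  · simpa using Complex.norm_dslope_le_div_of_mapsTo_ball hfd hfm (hmaps hz)
  · have hslope := sub_smul_dslope f 0 (blaschkeFactor a z)
    rw [hf0, sub_zero, sub_zero, smul_eq_mul] at hslope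
    have hfz : f (blaschkeFactor a z) = h z :=
      congrArg h (blaschkeFactor_blaschkeFactor ha (mem_ball_zero_iff.mp hz))
    rw [Function.comp_apply, hslope, hfz]

theorem norm_le_mul_prod_pseudoHyp {S : Finset ℂ} (hS : ∀ a ∈ S, ‖a‖ < 1)
    (hd : DifferentiableOn ℂ h (ball 0 1)) (hb : ∀ z ∈ ball (0 : ℂ) 1, ‖h z‖ ≤ M)
    (hzero : ∀ a ∈ S, h a = 0) {z : ℂ} (hz : z ∈ ball (0 : ℂ) 1) :
    ‖h z‖ ≤ M * ∏ a ∈ S, pseudoHyp z a := by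
  induction S using Finset.induction_on generalizing h with
  | empty => simpa using hb z hz
  | insert a S haS ih =>
    rw [Finset.forall_mem_insert] at hS hzero
    obtain ⟨g, hgd, hgb, hg⟩ := exists_eq_blaschkeFactor_mul hd hb hS.1 hzero.1
    have hgzero : ∀ b ∈ S, g b = 0 := fun b hbS ↦ by
      have hb1 := hS.2 b hbS
      have hab : a ≠ b := fun hab ↦ haS (hab ▸ hbS)
      have hprod := hg b (mem_ball_zero_iff.mpr hb1)
      rw [hzero.2 b hbS] at hprod
      exact (mul_eq_zero.mp hprod.symm).resolve_left (blaschkeFactor_ne_zero hS.1 hb1.le hab)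
    calc ‖h z‖ = pseudoHyp z a * ‖g z‖ := by rw [hg z hz, norm_mul, norm_blaschkeFactor]
      _ ≤ pseudoHyp z a * (M * ∏ b ∈ S, pseudoHyp z b) :=
        mul_le_mul_of_nonneg_left (ih hS.2 hgd hgb hgzero) (pseudoHyp_nonneg z a)
      _ = M * ∏ b ∈ insert a S, pseudoHyp z b := by rw [Finset.prod_insert haS]; ring

theorem IsInterpolating.uniformlySeparated {ι : Type*} {lam : ι → ℂ}
    (hlam : ∀ i, lam i ∈ ball (0 : ℂ) 1) (h : IsInterpolating (ball 0 1) lam) :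
    UniformlySeparated lam := by
  classical
  obtain ⟨M, hM⟩ := h.exists_uniform_bound isOpen_ball hlam
  refine ⟨(max M 1)⁻¹, by positivity, fun i F hi ↦ ?_⟩
  obtain ⟨φ, hd, hb, hφ⟩ := hM (Pi.single i 1) fun j ↦ by
    rcases eq_or_ne j i with rfl | hj <;> simp [*]
  have hzero : ∀ a ∈ F.image lam, φ a = 0 := by
    refine Finset.forall_mem_image.mpr fun j hj ↦ ?_
    rw [hφ, Pi.single_eq_of_ne (ne_of_mem_of_not_mem hj hi)]
  have hnorm : ∀ a ∈ F.image lam, ‖a‖ < 1 :=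
    Finset.forall_mem_image.mpr fun j _ ↦ mem_ball_zero_iff.mp (hlam j)
  have hle := norm_le_mul_prod_pseudoHyp hnorm hd (fun z hz ↦ (hb z hz).trans (le_max_left M 1))
    hzero (hlam i)
  rw [hφ, Pi.single_eq_same, norm_one, Finset.prod_image h.injective.injOn] at hle
  exact (inv_le_iff_one_le_mul₀' (by positivity)).mpr hle

end SchwarzLemma

section SumEstimates

variable {ι : Type*}

theorem sum_one_sub_sq_le_neg_two_mul_log_prod {s : Finset ι} {x : ι → ℝ}
    (hx : ∀ i ∈ s, 0 < x i) : ∑ i ∈ s, (1 - x i ^ 2) ≤ -2 * Real.log (∏ i ∈ s, x i) := by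
  rw [Real.log_prod fun i hi ↦ (hx i hi).ne', Finset.mul_sum]
  refine Finset.sum_le_sum fun i hi ↦ ?_
  have hlog := Real.log_le_sub_one_of_pos (pow_pos (hx i hi) 2)
  rw [Real.log_pow] at hlog
  push_cast at hlog
  linarith

/-- A discrete form of `∫₀ᴮ e⁻ᵗ dt = 1 - e⁻ᴮ`, the terms being lower Riemann sums. -/
theorem sum_mul_exp_neg_sum_le {α : Type*} [LinearOrder α] {b : ι → ℝ} (hb : ∀ i, 0 ≤ b i)
    (r : ι → α) (s : Finset ι) :
    ∑ j ∈ s, b j * Real.exp (-∑ k ∈ s with r j ≤ r k, b k) ≤ 1 - Real.exp (-∑ k ∈ s, b k) := by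
  classical
  induction s using Finset.induction_on_min_value r with
  | empty => simp
  | insert a s ha hmin ih =>
    have hfilter : {k ∈ insert a s | r a ≤ r k} = insert a s :=
      Finset.filter_true_of_mem (Finset.forall_mem_insert _ _ _ |>.mpr ⟨le_rfl, hmin⟩)
    have hmono : ∑ j ∈ s, b j * Real.exp (-∑ k ∈ insert a s with r j ≤ r k, b k) ≤
        ∑ j ∈ s, b j * Real.exp (-∑ k ∈ s with r j ≤ r k, b k) := by
      gcongr with j
      · exact hb j
      · exact fun k _ _ ↦ hb k
      · exact Finset.subset_insert a s
    rw [Finset.sum_insert ha, hfilter, Finset.sum_insert ha]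
    set B := ∑ k ∈ s, b k
    have hstep : b a * Real.exp (-(b a + B)) ≤ Real.exp (-B) - Real.exp (-(b a + B)) := by
      have hsplit : Real.exp (-B) = Real.exp (b a) * Real.exp (-(b a + B)) := by
        rw [← Real.exp_add]
        ring_nf
      rw [hsplit, ← sub_one_mul]
      gcongr
      linarith [Real.add_one_le_exp (b a)]
    linarith

end SumEstimates

section Jones

variable {ι : Type*} {lam : ι → ℂ} {a b z : ℂ} {ε : ℝ} {F : Finset ι} {j : ι}

theorem sum_sq_norm_szegoGram_le [DecidableEq ι] (hlam : ∀ i, ‖lam i‖ < 1) (hε : 0 < ε)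
    (hj : j ∈ F) (h : ε ≤ ∏ k ∈ F.erase j, pseudoHyp (lam j) (lam k)) :
    ∑ k ∈ F, ‖szegoGram (lam j) (lam k)‖ ^ 2 ≤ 1 - 2 * Real.log ε := by
  have hpos : ∀ k ∈ F.erase j, 0 < pseudoHyp (lam j) (lam k) := fun k hk ↦
    (pseudoHyp_nonneg _ _).lt_of_ne' (Finset.prod_ne_zero_iff.mp (hε.trans_le h).ne' k hk)
  have hsum := sum_one_sub_sq_le_neg_two_mul_log_prod hpos
  have hlog := Real.log_le_log hε h
  rw [← Finset.add_sum_erase F _ hj, szegoGram_self (hlam j), norm_one, one_pow]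
  simp only [sq_norm_szegoGram_eq_one_sub (hlam _) (hlam _)]
  linarith

/-- A multiple of the Herglotz kernel: an analytic function of `z` with positive real part on the
disc, comparable to `‖szegoGram a z‖ ^ 2` for `|z| ≤ |a|`. -/
noncomputable def herglotz (a z : ℂ) : ℂ :=
  (1 - ‖a‖ ^ 2 : ℝ) * ((1 + conj a * z) / (1 - conj a * z))

/-- The weights in Jones's construction, of which `‖szegoGram a z‖ ^ 2` is the symmetric variant. -/
noncomputable def jonesWeight (a z : ℂ) : ℝ := (1 - ‖a‖ ^ 2) ^ 2 / ‖1 - conj a * z‖ ^ 2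

theorem jonesWeight_nonneg (a z : ℂ) : 0 ≤ jonesWeight a z := by
  unfold jonesWeight
  positivity

theorem differentiableOn_herglotz (ha : ‖a‖ < 1) : DifferentiableOn ℂ (herglotz a) (ball 0 1) :=
  .const_mul (DifferentiableOn.fun_div (by fun_prop) (by fun_prop) fun _ hz ↦
    one_sub_conj_mul_ne_zero ha (mem_ball_zero_iff.mp hz).le) _

theorem re_herglotz (a z : ℂ) :
    (herglotz a z).re = (1 - ‖a‖ ^ 2) * (1 - ‖a‖ ^ 2 * ‖z‖ ^ 2) / ‖1 - conj a * z‖ ^ 2 := by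
  have hnorm : ‖a‖ ^ 2 * ‖z‖ ^ 2 = ‖conj a * z‖ ^ 2 := by
    rw [norm_mul, Complex.norm_conj, mul_pow]
  rw [herglotz, Complex.re_ofReal_mul, mul_div_assoc, hnorm, Complex.div_re, ← add_div,
    Complex.sq_norm (conj a * z), Complex.sq_norm (1 - _)]
  congr 2
  simp only [Complex.normSq_apply, Complex.add_re, Complex.add_im, Complex.sub_re, Complex.sub_im,
    Complex.one_re, Complex.one_im]
  ring

theorem jonesWeight_le_re_herglotz (ha : ‖a‖ ≤ 1) (hz : ‖z‖ ≤ 1) :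
    jonesWeight a z ≤ (herglotz a z).re := by
  rw [jonesWeight, re_herglotz, sq (1 - ‖a‖ ^ 2)]
  have ha2 : 0 ≤ 1 - ‖a‖ ^ 2 := sub_nonneg.mpr (pow_le_one₀ (norm_nonneg a) ha)
  gcongr
  exact mul_le_of_le_one_right (sq_nonneg _) (pow_le_one₀ (norm_nonneg z) hz)

theorem re_herglotz_le (ha : ‖a‖ < 1) (hba : ‖b‖ ≤ ‖a‖) :
    (herglotz a b).re ≤ 2 * ‖szegoGram b a‖ ^ 2 := by
  have ha2 := (one_sub_sq_norm_pos ha).le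
  have hb2 : 1 - ‖a‖ ^ 2 * ‖b‖ ^ 2 ≤ 2 * (1 - ‖b‖ ^ 2) := by
    have hsq : ‖b‖ ^ 2 ≤ ‖a‖ ^ 2 := by gcongr
    nlinarith [mul_nonneg ha2 (sq_nonneg ‖b‖), one_sub_sq_norm_pos (hba.trans_lt ha)]
  calc (herglotz a b).re
      = (1 - ‖a‖ ^ 2) * (1 - ‖a‖ ^ 2 * ‖b‖ ^ 2) / ‖1 - conj a * b‖ ^ 2 := re_herglotz a b
    _ ≤ (1 - ‖a‖ ^ 2) * (2 * (1 - ‖b‖ ^ 2)) / ‖1 - conj a * b‖ ^ 2 := by gcongr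
    _ = 2 * ‖szegoGram b a‖ ^ 2 := by
      rw [sq_norm_szegoGram (hba.trans_lt ha) ha, norm_one_sub_conj_mul_comm]
      ring

/-- P. Jones's explicit interpolating functions: `jonesFunction lam F j` is `1` at `lam j` and `0`
at `lam i` for the other `i ∈ F`. -/
noncomputable def jonesFunction [DecidableEq ι] (lam : ι → ℂ) (F : Finset ι) (j : ι) (z : ℂ) : ℂ :=
  (∏ k ∈ F.erase j, blaschkeFactor (lam k) z / blaschkeFactor (lam k) (lam j)) *
    ((1 - ‖lam j‖ ^ 2 : ℝ) / (1 - conj (lam j) * z)) ^ 2 *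
    Complex.exp (∑ k ∈ F with ‖lam j‖ ≤ ‖lam k‖, (herglotz (lam k) (lam j) - herglotz (lam k) z))

section

variable [DecidableEq ι]

theorem differentiableOn_jonesFunction (hlam : ∀ i, ‖lam i‖ < 1) (F : Finset ι) (j : ι) :
    DifferentiableOn ℂ (jonesFunction lam F j) (ball 0 1) := by
  have hkernel : DifferentiableOn ℂ
      (fun z ↦ ((1 - ‖lam j‖ ^ 2 : ℝ) : ℂ) / (1 - conj (lam j) * z)) (ball 0 1) :=
    .fun_div (by fun_prop) (by fun_prop) fun _ hz ↦
      one_sub_conj_mul_ne_zero (hlam j) (mem_ball_zero_iff.mp hz).le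
  refine .fun_mul (.fun_mul ?_ (hkernel.fun_pow 2)) (.cexp ?_)
  · exact .fun_finsetProd fun k _ ↦ (differentiableOn_blaschkeFactor (hlam k)).div_const _
  · exact .fun_sum fun k _ ↦ (differentiableOn_herglotz (hlam k)).const_sub _

theorem jonesFunction_self (hlam : ∀ i, ‖lam i‖ < 1) (hinj : Function.Injective lam)
    (F : Finset ι) (j : ι) : jonesFunction lam F j (lam j) = 1 := by
  have hprod : ∏ k ∈ F.erase j,
      blaschkeFactor (lam k) (lam j) / blaschkeFactor (lam k) (lam j) = 1 :=
    Finset.prod_eq_one fun k hk ↦ div_self <|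
      blaschkeFactor_ne_zero (hlam k) (hlam j).le (hinj.ne (Finset.ne_of_mem_erase hk))
  simp [jonesFunction, hprod, -Complex.ofReal_sub, ofReal_one_sub_sq_norm,
    one_sub_conj_mul_ne_zero (hlam j) (hlam j).le]

theorem jonesFunction_of_ne {i : ι} (hi : i ∈ F) (hij : i ≠ j) :
    jonesFunction lam F j (lam i) = 0 := by
  rw [jonesFunction, Finset.prod_eq_zero (Finset.mem_erase.mpr ⟨hij, hi⟩), zero_mul, zero_mul]
  rw [blaschkeFactor_self, zero_div]

theorem sum_mul_jonesFunction (hlam : ∀ i, ‖lam i‖ < 1) (hinj : Function.Injective lam)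
    (w : ι → ℂ) {i : ι} (hi : i ∈ F) : ∑ j ∈ F, w j * jonesFunction lam F j (lam i) = w i := by
  rw [Finset.sum_eq_single_of_mem i hi fun j _ hji ↦ by
    rw [jonesFunction_of_ne hi hji.symm, mul_zero], jonesFunction_self hlam hinj, mul_one]

theorem norm_prod_blaschkeFactor_div_le (hlam : ∀ i, ‖lam i‖ < 1) (hε : 0 < ε)
    (h : ε ≤ ∏ k ∈ F.erase j, pseudoHyp (lam j) (lam k)) (hz : ‖z‖ < 1) :
    ‖∏ k ∈ F.erase j, blaschkeFactor (lam k) z / blaschkeFactor (lam k) (lam j)‖ ≤ 1 / ε := by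
  simp only [norm_prod, norm_div, norm_blaschkeFactor, Finset.prod_div_distrib]
  refine div_le_div₀ zero_le_one (Finset.prod_le_one ?_ ?_) hε h
  · exact fun k _ ↦ pseudoHyp_nonneg z (lam k)
  · exact fun k _ ↦ (pseudoHyp_lt_one hz (hlam k)).le

theorem norm_exp_sum_herglotz_sub_le (hlam : ∀ i, ‖lam i‖ < 1) (hε : 0 < ε) (hj : j ∈ F)
    (h : ε ≤ ∏ k ∈ F.erase j, pseudoHyp (lam j) (lam k)) (hz : ‖z‖ < 1) :
    ‖Complex.exp (∑ k ∈ F with ‖lam j‖ ≤ ‖lam k‖,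
        (herglotz (lam k) (lam j) - herglotz (lam k) z))‖ ≤
      Real.exp (2 * (1 - 2 * Real.log ε)) *
        Real.exp (-∑ k ∈ F with ‖lam j‖ ≤ ‖lam k‖, jonesWeight (lam k) z) := by
  have hself : ∑ k ∈ F with ‖lam j‖ ≤ ‖lam k‖, (herglotz (lam k) (lam j)).re ≤
      2 * (1 - 2 * Real.log ε) :=
    calc ∑ k ∈ F with ‖lam j‖ ≤ ‖lam k‖, (herglotz (lam k) (lam j)).re
        ≤ ∑ k ∈ F with ‖lam j‖ ≤ ‖lam k‖, 2 * ‖szegoGram (lam j) (lam k)‖ ^ 2 :=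
          Finset.sum_le_sum fun k hk ↦ re_herglotz_le (hlam k) (Finset.mem_filter.mp hk).2
      _ ≤ ∑ k ∈ F, 2 * ‖szegoGram (lam j) (lam k)‖ ^ 2 :=
          Finset.sum_le_sum_of_subset_of_nonneg (Finset.filter_subset _ _) fun _ _ _ ↦ by positivity
      _ ≤ 2 * (1 - 2 * Real.log ε) := by
          rw [← Finset.mul_sum]
          gcongr
          exact sum_sq_norm_szegoGram_le hlam hε hj h
  have hweight : ∑ k ∈ F with ‖lam j‖ ≤ ‖lam k‖, jonesWeight (lam k) z ≤
      ∑ k ∈ F with ‖lam j‖ ≤ ‖lam k‖, (herglotz (lam k) z).re :=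
    Finset.sum_le_sum fun k _ ↦ jonesWeight_le_re_herglotz (hlam k).le hz.le
  rw [Complex.norm_exp, ← Real.exp_add, Real.exp_le_exp, Finset.sum_sub_distrib, Complex.sub_re,
    Complex.re_sum, Complex.re_sum]
  linarith

theorem norm_jonesFunction_le (hlam : ∀ i, ‖lam i‖ < 1) (hε : 0 < ε) (hj : j ∈ F)
    (h : ε ≤ ∏ k ∈ F.erase j, pseudoHyp (lam j) (lam k)) (hz : ‖z‖ < 1) :
    ‖jonesFunction lam F j z‖ ≤ 1 / ε * Real.exp (2 * (1 - 2 * Real.log ε)) *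
      (jonesWeight (lam j) z *
        Real.exp (-∑ k ∈ F with ‖lam j‖ ≤ ‖lam k‖, jonesWeight (lam k) z)) := by
  have hsq : ‖((1 - ‖lam j‖ ^ 2 : ℝ) / (1 - conj (lam j) * z) : ℂ) ^ 2‖ =
      jonesWeight (lam j) z := by
    rw [norm_pow, norm_div, Complex.norm_real,
      Real.norm_of_nonneg (one_sub_sq_norm_pos (hlam j)).le, div_pow, jonesWeight]
  have hweight := jonesWeight_nonneg (lam j) z
  have hprod := norm_prod_blaschkeFactor_div_le hlam hε h hz
  have hexp := norm_exp_sum_herglotz_sub_le hlam hε hj h hz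
  rw [jonesFunction, norm_mul, norm_mul, hsq]
  refine (mul_le_mul (mul_le_mul_of_nonneg_right hprod hweight) hexp (norm_nonneg _)
    (by positivity)).trans_eq ?_
  ring

end

theorem UniformlySeparated.isInterpolating (hlam : ∀ i, lam i ∈ ball (0 : ℂ) 1)
    (h : UniformlySeparated lam) : IsInterpolating (ball 0 1) lam := by
  classical
  have hinj := h.weaklySeparated.injective
  have hlam' : ∀ i, ‖lam i‖ < 1 := fun i ↦ mem_ball_zero_iff.mp (hlam i)
  obtain ⟨ε, hε, hsep⟩ := h
  rintro w ⟨W, hW⟩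
  set K := 1 / ε * Real.exp (2 * (1 - 2 * Real.log ε))
  have : 0 ≤ K := by positivity
  suffices hfin : ∀ F : Finset ι, ∃ φ : ℂ → ℂ, DifferentiableOn ℂ φ (ball 0 1) ∧
      (∀ z ∈ ball (0 : ℂ) 1, ‖φ z‖ ≤ |W| * K) ∧ ∀ i ∈ F, φ (lam i) = w i by
    obtain ⟨φ, hd, hb, hφ⟩ := exists_interpolating_of_forall_finset isOpen_ball hlam hfin
    exact ⟨φ, hd, ⟨_, hb⟩, hφ⟩
  refine fun F ↦ ⟨fun z ↦ ∑ j ∈ F, w j * jonesFunction lam F j z, ?_, fun z hz ↦ ?_, ?_⟩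
  · exact .fun_sum fun j _ ↦ (differentiableOn_jonesFunction hlam' F j).const_mul _
  · let b : ι → ℝ := fun k ↦ jonesWeight (lam k) z
    have hterm : ∀ j ∈ F, ‖w j * jonesFunction lam F j z‖ ≤
        |W| * (K * (b j * Real.exp (-∑ k ∈ F with ‖lam j‖ ≤ ‖lam k‖, b k))) := fun j hj ↦ by
      rw [norm_mul]
      exact mul_le_mul ((hW j).trans (le_abs_self W)) (norm_jonesFunction_le hlam' hε hj
        (hsep j _ (Finset.notMem_erase j F)) (mem_ball_zero_iff.mp hz)) (norm_nonneg _)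
        (abs_nonneg W)
    have hsum := sum_mul_exp_neg_sum_le (b := b) (fun k ↦ jonesWeight_nonneg _ _)
      (fun k ↦ ‖lam k‖) F
    calc ‖∑ j ∈ F, w j * jonesFunction lam F j z‖
        ≤ ∑ j ∈ F, |W| * (K * (b j * Real.exp (-∑ k ∈ F with ‖lam j‖ ≤ ‖lam k‖, b k))) :=
          norm_sum_le_of_le F hterm
      _ = |W| * (K * ∑ j ∈ F, b j * Real.exp (-∑ k ∈ F with ‖lam j‖ ≤ ‖lam k‖, b k)) := by
          rw [Finset.mul_sum, Finset.mul_sum]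
      _ ≤ |W| * (K * 1) := by
          gcongr
          exact hsum.trans (sub_le_self 1 (Real.exp_nonneg _))
      _ = |W| * K := by rw [mul_one]
  · exact fun i hi ↦ sum_mul_jonesFunction hlam' hinj w hi

end Jones

section BoundedGram

variable {ι : Type*}

/-- The sesquilinear form `∑_{i,j ∈ F} aᵢ b̄ⱼ Gᵢⱼ` of the finite section of the matrix `G` on
`F`. -/
noncomputable def sesqForm (G : ι → ι → ℂ) (F : Finset ι) (a b : ι → ℂ) : ℂ :=
  ∑ i ∈ F, ∑ j ∈ F, a i * conj (b j) * G i j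

/-- The Grammian of the normalised Szegő kernels at the points `lam i`. -/
noncomputable def szegoGrammian (lam : ι → ℂ) (i j : ι) : ℂ := szegoGram (lam i) (lam j)

/-- The second half of condition (3): boundedness of the Szegő Grammian on `ℓ²`, tested on finitely
supported sequences. -/
def HasBoundedGrammian (lam : ι → ℂ) : Prop :=
  ∃ M > (0 : ℝ), ∀ (F : Finset ι) (a : ι → ℂ),
    ‖sesqForm (szegoGrammian lam) F a a‖ ≤ M * ∑ i ∈ F, ‖a i‖ ^ 2

end BoundedGram

section HardySpace

variable {a : ℂ} {f : ℂ → ℂ}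

/-- The Szegő kernel at `a`, that is, the reproducing kernel of the Hardy space `H²`, normalised to
have `H²` norm `1`. -/
noncomputable def normalizedSzegoKernel (a z : ℂ) : ℂ :=
  (√(1 - ‖a‖ ^ 2) : ℝ) / (1 - conj a * z)

theorem diffContOnCl_normalizedSzegoKernel (ha : ‖a‖ < 1) :
    DiffContOnCl ℂ (normalizedSzegoKernel a) (ball 0 1) := by
  refine DifferentiableOn.diffContOnCl ?_
  rw [closure_ball _ one_ne_zero]
  exact .fun_div (by fun_prop) (by fun_prop) fun _ hz ↦
    one_sub_conj_mul_ne_zero ha (mem_closedBall_zero_iff.mp hz)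

theorem continuousOn_sphere_of_diffContOnCl (hf : DiffContOnCl ℂ f (ball 0 1)) :
    ContinuousOn f (sphere 0 1) :=
  hf.continuousOn_ball.mono sphere_subset_closedBall

/-- On the unit circle `conj z = z⁻¹`, which turns Cauchy's formula into the reproducing
property. -/
theorem circleAverage_mul_conj_normalizedSzegoKernel (hf : DiffContOnCl ℂ f (ball 0 1))
    (ha : ‖a‖ < 1) :
    Real.circleAverage (fun z ↦ f z * conj (normalizedSzegoKernel a z)) 0 1 =
      (√(1 - ‖a‖ ^ 2) : ℝ) * f a := by
  have hCauchy := DiffContOnCl.circleAverage_smul_div (f := f) (c := 0) (R := 1) (w := a)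
    (by rwa [abs_one]) (by simpa using ha)
  rw [← hCauchy, ← smul_eq_mul, ← Real.circleAverage_fun_smul]
  refine Real.circleAverage_congr_sphere fun z hz ↦ ?_
  have hz1 : ‖z‖ = 1 := by simpa using hz
  have hzz : z * conj z = 1 := by rw [Complex.mul_conj', hz1, Complex.ofReal_one, one_pow]
  have hza : z - a ≠ 0 := sub_ne_zero_of_ne fun h ↦ (h ▸ ha).ne hz1
  have hconj : 1 - a * conj z ≠ 0 := by
    simpa using (map_ne_zero conj).mpr (one_sub_conj_mul_ne_zero ha hz1.le)
  simp only [normalizedSzegoKernel, sub_zero, smul_eq_mul, map_div₀, Complex.conj_ofReal, map_sub,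
    map_one, map_mul, Complex.conj_conj]
  field_simp
  linear_combination (f z * (√(1 - ‖a‖ ^ 2) : ℝ) * a) * hzz

theorem re_circleAverage_mul_mul_conj_le {u v : ℂ → ℂ} {c : ℂ} {R M : ℝ}
    (hf : ContinuousOn f (sphere c |R|)) (hb : ∀ z ∈ sphere c |R|, ‖f z‖ ≤ M)
    (hu : ContinuousOn u (sphere c |R|)) (hv : ContinuousOn v (sphere c |R|)) :
    (Real.circleAverage (fun z ↦ f z * u z * conj (v z)) c R).re ≤
      2⁻¹ * Real.circleAverage (fun z ↦ ‖u z‖ ^ 2) c R +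
        2⁻¹ * M ^ 2 * Real.circleAverage (fun z ↦ ‖v z‖ ^ 2) c R := by
  have hpoint : ∀ z ∈ sphere c |R|,
      (f z * u z * conj (v z)).re ≤ 2⁻¹ * ‖u z‖ ^ 2 + 2⁻¹ * M ^ 2 * ‖v z‖ ^ 2 := fun z hz ↦
    calc (f z * u z * conj (v z)).re ≤ ‖f z‖ * ‖u z‖ * ‖v z‖ := by
          simpa using Complex.re_le_norm (f z * u z * conj (v z))
      _ ≤ M * ‖u z‖ * ‖v z‖ := by
          gcongr
          exact hb z hz
      _ ≤ 2⁻¹ * ‖u z‖ ^ 2 + 2⁻¹ * M ^ 2 * ‖v z‖ ^ 2 := by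
          linarith [two_mul_le_add_sq ‖u z‖ (M * ‖v z‖), mul_pow M ‖v z‖ 2]
  have hprod : ContinuousOn (fun z ↦ f z * u z * conj (v z)) (sphere c |R|) :=
    (hf.mul hu).mul hv.star
  have huint : CircleIntegrable (fun z ↦ (2⁻¹ : ℝ) • ‖u z‖ ^ 2) c R :=
    ContinuousOn.circleIntegrable' (by fun_prop)
  have hvint : CircleIntegrable (fun z ↦ (2⁻¹ * M ^ 2) • ‖v z‖ ^ 2) c R :=
    ContinuousOn.circleIntegrable' (by fun_prop)
  calc (Real.circleAverage (fun z ↦ f z * u z * conj (v z)) c R).re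
      = Real.circleAverage (fun z ↦ (f z * u z * conj (v z)).re) c R :=
        (Complex.reCLM.circleAverage_comp_comm hprod.circleIntegrable').symm
    _ ≤ Real.circleAverage
          (fun z ↦ (2⁻¹ : ℝ) • ‖u z‖ ^ 2 + (2⁻¹ * M ^ 2) • ‖v z‖ ^ 2) c R :=
        Real.circleAverage_mono
          (Complex.continuous_re.comp_continuousOn hprod).circleIntegrable'
          (huint.add hvint) hpoint
    _ = _ := by
        rw [Real.circleAverage_fun_add huint hvint, Real.circleAverage_fun_smul,
          Real.circleAverage_fun_smul, smul_eq_mul, smul_eq_mul]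

end HardySpace

section Pick

variable {ι : Type*} {lam : ι → ℂ} {f : ℂ → ℂ} {M : ℝ}

/-- The combination `∑_{j ∈ F} āⱼ kⱼ` of normalised Szegő kernels at the points `lam j`; the
coefficients are conjugated so that its `H²` norm is given by the Grammian `Gᵢⱼ = ⟨kⱼ, kᵢ⟩`. -/
noncomputable def szegoSum (lam : ι → ℂ) (F : Finset ι) (a : ι → ℂ) (z : ℂ) : ℂ :=
  ∑ j ∈ F, conj (a j) * normalizedSzegoKernel (lam j) z

theorem diffContOnCl_szegoSum (hlam : ∀ i, ‖lam i‖ < 1) (F : Finset ι) (a : ι → ℂ) :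
    DiffContOnCl ℂ (szegoSum lam F a) (ball 0 1) :=
  ⟨.fun_sum fun j _ ↦ (diffContOnCl_normalizedSzegoKernel (hlam j)).differentiableOn.const_mul _,
    continuousOn_finsetSum _ fun j _ ↦
      (diffContOnCl_normalizedSzegoKernel (hlam j)).continuousOn.const_mul _⟩

theorem circleAverage_mul_conj_szegoSum (hlam : ∀ i, ‖lam i‖ < 1)
    (hf : DiffContOnCl ℂ f (ball 0 1)) (F : Finset ι) (a : ι → ℂ) :
    Real.circleAverage (fun z ↦ f z * conj (szegoSum lam F a z)) 0 1 =
      ∑ i ∈ F, a i * ((√(1 - ‖lam i‖ ^ 2) : ℝ) * f (lam i)) := by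
  have hint : ∀ i ∈ F, CircleIntegrable
      (fun z ↦ a i • (f z * conj (normalizedSzegoKernel (lam i) z))) 0 1 := fun i _ ↦
    (ContinuousOn.circleIntegrable zero_le_one
      ((continuousOn_sphere_of_diffContOnCl hf).mul (continuousOn_sphere_of_diffContOnCl
        (diffContOnCl_normalizedSzegoKernel (hlam i))).star)).const_smul
  calc Real.circleAverage (fun z ↦ f z * conj (szegoSum lam F a z)) 0 1
      = Real.circleAverage
          (fun z ↦ ∑ i ∈ F, a i • (f z * conj (normalizedSzegoKernel (lam i) z))) 0 1 := by
        congr 1 with z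
        simp only [szegoSum, map_sum, map_mul, Complex.conj_conj, Finset.mul_sum, smul_eq_mul]
        exact Finset.sum_congr rfl fun i _ ↦ mul_left_comm _ _ _
    _ = ∑ i ∈ F, a i * ((√(1 - ‖lam i‖ ^ 2) : ℝ) * f (lam i)) := by
        rw [Real.circleAverage_fun_sum hint]
        refine Finset.sum_congr rfl fun i _ ↦ ?_
        rw [Real.circleAverage_fun_smul, circleAverage_mul_conj_normalizedSzegoKernel hf (hlam i),
          smul_eq_mul]

theorem szegoSum_apply (lam : ι → ℂ) (F : Finset ι) (b : ι → ℂ) (i : ι) :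
    (√(1 - ‖lam i‖ ^ 2) : ℝ) * szegoSum lam F b (lam i) =
      ∑ j ∈ F, conj (b j) * szegoGrammian lam i j := by
  rw [szegoSum, Finset.mul_sum]
  refine Finset.sum_congr rfl fun j _ ↦ ?_
  rw [szegoGrammian, szegoGram, normalizedSzegoKernel, mul_comm (lam i)]
  push_cast
  ring

theorem circleAverage_mul_szegoSum_mul_conj_szegoSum (hlam : ∀ i, ‖lam i‖ < 1)
    (hf : DiffContOnCl ℂ f (ball 0 1)) (F : Finset ι) (a b : ι → ℂ) :
    Real.circleAverage (fun z ↦ f z * szegoSum lam F b z * conj (szegoSum lam F a z)) 0 1 =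
      sesqForm (szegoGrammian lam) F (fun i ↦ f (lam i) * a i) b := by
  have hb := diffContOnCl_szegoSum hlam F b
  rw [circleAverage_mul_conj_szegoSum hlam (f := fun z ↦ f z * szegoSum lam F b z)
    ⟨hf.differentiableOn.fun_mul hb.differentiableOn, hf.continuousOn.mul hb.continuousOn⟩]
  refine Finset.sum_congr rfl fun i _ ↦ ?_
  rw [mul_left_comm _ (f (lam i)), szegoSum_apply, Finset.mul_sum, Finset.mul_sum]
  exact Finset.sum_congr rfl fun j _ ↦ by ring

theorem sesqForm_szegoGrammian_self (hlam : ∀ i, ‖lam i‖ < 1) (F : Finset ι) (a : ι → ℂ) :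
    sesqForm (szegoGrammian lam) F a a =
      (Real.circleAverage (fun z ↦ ‖szegoSum lam F a z‖ ^ 2) 0 1 : ℝ) := by
  have hint : CircleIntegrable (fun z ↦ ‖szegoSum lam F a z‖ ^ 2) 0 1 :=
    ((continuousOn_sphere_of_diffContOnCl (diffContOnCl_szegoSum hlam F a)).norm.pow
      2).circleIntegrable zero_le_one
  have hreal := Complex.ofRealCLM.circleAverage_comp_comm hint
  have hform := circleAverage_mul_szegoSum_mul_conj_szegoSum hlam (f := fun _ ↦ 1)
    diffContOnCl_const F a a
  simp only [one_mul, Complex.mul_conj'] at hform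
  rw [← Complex.ofRealCLM_apply, ← hreal, ← hform]
  simp only [Function.comp_def, Complex.ofRealCLM_apply, Complex.ofReal_pow]

theorem norm_sesqForm_szegoGrammian_self (hlam : ∀ i, ‖lam i‖ < 1) (F : Finset ι) (a : ι → ℂ) :
    ‖sesqForm (szegoGrammian lam) F a a‖ =
      Real.circleAverage (fun z ↦ ‖szegoSum lam F a z‖ ^ 2) 0 1 := by
  rw [sesqForm_szegoGrammian_self hlam, Complex.norm_of_nonneg]
  exact Real.circleAverage_nonneg_of_nonneg fun z _ ↦ sq_nonneg _

theorem sesqForm_szegoGrammian_self_eq_norm (hlam : ∀ i, ‖lam i‖ < 1) (F : Finset ι) (a : ι → ℂ) :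
    sesqForm (szegoGrammian lam) F a a = ‖sesqForm (szegoGrammian lam) F a a‖ := by
  rw [norm_sesqForm_szegoGrammian_self hlam, sesqForm_szegoGrammian_self hlam]

/-- The adjoint of multiplication by `f` on `H²` maps the kernel sum with coefficients `a` to the
one with coefficients `f (lam i) * a i`. -/
theorem norm_sesqForm_szegoGrammian_le_of_diffContOnCl (hlam : ∀ i, ‖lam i‖ < 1)
    (hf : DiffContOnCl ℂ f (ball 0 1)) (hb : ∀ z ∈ sphere (0 : ℂ) 1, ‖f z‖ ≤ M)
    (F : Finset ι) (a : ι → ℂ) :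
    ‖sesqForm (szegoGrammian lam) F (fun i ↦ f (lam i) * a i) (fun i ↦ f (lam i) * a i)‖ ≤
      M ^ 2 * ‖sesqForm (szegoGrammian lam) F a a‖ := by
  set fa : ι → ℂ := fun i ↦ f (lam i) * a i with hfa
  have hcont : ∀ b, ContinuousOn (szegoSum lam F b) (sphere 0 |1|) := fun b ↦ by
    rw [abs_one]
    exact continuousOn_sphere_of_diffContOnCl (diffContOnCl_szegoSum hlam F b)
  have hle := re_circleAverage_mul_mul_conj_le (c := 0) (R := 1)
    (by simpa using continuousOn_sphere_of_diffContOnCl hf) (by simpa using hb) (hcont fa) (hcont a)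
  rw [circleAverage_mul_szegoSum_mul_conj_szegoSum hlam hf, ← hfa,
    sesqForm_szegoGrammian_self_eq_norm hlam F fa, Complex.ofReal_re,
    ← norm_sesqForm_szegoGrammian_self hlam, ← norm_sesqForm_szegoGrammian_self hlam] at hle
  linarith

/-- **Pick's inequality.** The boundary values needed in
`norm_sesqForm_szegoGrammian_le_of_diffContOnCl` are provided by the dilations `z ↦ f (r * z)`. -/
theorem norm_sesqForm_szegoGrammian_le (hlam : ∀ i, ‖lam i‖ < 1)
    (hf : DifferentiableOn ℂ f (ball 0 1)) (hb : ∀ z ∈ ball (0 : ℂ) 1, ‖f z‖ ≤ M)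
    (F : Finset ι) (a : ι → ℂ) :
    ‖sesqForm (szegoGrammian lam) F (fun i ↦ f (lam i) * a i) (fun i ↦ f (lam i) * a i)‖ ≤
      M ^ 2 * ‖sesqForm (szegoGrammian lam) F a a‖ := by
  let fr (r : ℝ) (i : ι) : ℂ := f (r * lam i) * a i
  have hmaps : ∀ r ∈ Set.Ioo (0 : ℝ) 1,
      Set.MapsTo (fun z : ℂ ↦ r * z) (closedBall 0 1) (ball 0 1) := fun r hr z hz ↦ by
    rw [mem_closedBall_zero_iff] at hz
    rw [mem_ball_zero_iff, norm_mul, Complex.norm_real, Real.norm_of_nonneg hr.1.le]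
    exact mul_lt_one_of_nonneg_of_lt_one_left hr.1.le hr.2 hz
  have hdil : ∀ᶠ r in 𝓝[<] (1 : ℝ), ‖sesqForm (szegoGrammian lam) F (fr r) (fr r)‖ ≤
      M ^ 2 * ‖sesqForm (szegoGrammian lam) F a a‖ := by
    filter_upwards [Ioo_mem_nhdsLT zero_lt_one] with r hr
    refine norm_sesqForm_szegoGrammian_le_of_diffContOnCl (f := fun z ↦ f (r * z)) hlam
      (DifferentiableOn.diffContOnCl ?_)
      (fun z hz ↦ hb _ (hmaps r hr (sphere_subset_closedBall hz))) F a
    rw [closure_ball _ one_ne_zero]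
    exact hf.comp (by fun_prop) (hmaps r hr)
  have hlim : ∀ i, Tendsto (fr · i) (𝓝[<] 1) (𝓝 (f (lam i) * a i)) := fun i ↦ by
    have hcont : ContinuousAt f (lam i) :=
      hf.continuousOn.continuousAt (isOpen_ball.mem_nhds (mem_ball_zero_iff.mpr (hlam i)))
    have hline : Tendsto (fun r : ℝ ↦ r * lam i) (𝓝[<] 1) (𝓝 (lam i)) := by
      have : Continuous fun r : ℝ ↦ r * lam i := by fun_prop
      simpa using (this.tendsto 1).mono_left nhdsWithin_le_nhds
    exact (hcont.tendsto.comp hline).mul_const (a i)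
  have hform := tendsto_finsetSum F fun i _ ↦ tendsto_finsetSum F fun j _ ↦
    ((hlim i).mul ((Complex.continuous_conj.tendsto _).comp (hlim j))).mul_const
      (szegoGrammian lam i j)
  exact le_of_tendsto hform.norm hdil

end Pick

section SignChoice

variable {ι : Type*}

/-- Averaged over all choices of signs the left-hand side equals the right-hand side. -/
theorem exists_sign_sum_mul_le_sum_diag (c : ι → ι → ℝ) (F : Finset ι) :
    ∃ s : ι → ℝ, (∀ i, |s i| = 1) ∧
      ∑ i ∈ F, ∑ j ∈ F, s i * s j * c i j ≤ ∑ i ∈ F, c i i := by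
  classical
  induction F using Finset.induction_on with
  | empty => exact ⟨fun _ ↦ 1, by simp⟩
  | insert k F hk ih =>
    obtain ⟨s, hs, hle⟩ := ih
    set X := ∑ j ∈ F, s j * (c k j + c j k) with hX
    obtain ⟨t, ht, htX⟩ : ∃ t : ℝ, |t| = 1 ∧ t * X ≤ 0 := by
      rcases le_total X 0 with h | h
      · exact ⟨1, abs_one, by simpa using h⟩
      · exact ⟨-1, by simp, by simpa using h⟩
    have hts : ∀ i ∈ F, Function.update s k t i = s i := fun i hi ↦
      Function.update_of_ne (ne_of_mem_of_not_mem hi hk) t s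
    refine ⟨Function.update s k t, fun i ↦ ?_, ?_⟩
    · rcases eq_or_ne i k with rfl | hik <;> simp [*]
    have hrow : ∀ i ∈ F,
        ∑ j ∈ insert k F, Function.update s k t i * Function.update s k t j * c i j =
          t * (s i * c i k) + ∑ j ∈ F, s i * s j * c i j := fun i hi ↦ by
      rw [Finset.sum_insert hk, Function.update_self, hts i hi,
        Finset.sum_congr rfl fun j hj ↦ by rw [hts j hj]]
      ring
    have hnew : ∑ j ∈ F, t * Function.update s k t j * c k j = t * ∑ j ∈ F, s j * c k j := by
      rw [Finset.mul_sum]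
      exact Finset.sum_congr rfl fun j hj ↦ by rw [hts j hj]; ring
    have htt : t * t = 1 := by rw [← abs_mul_abs_self, ht, one_mul]
    rw [Finset.sum_insert hk, Finset.sum_congr rfl hrow, Finset.sum_insert hk, Finset.sum_insert hk,
      Finset.sum_add_distrib, ← Finset.mul_sum, Function.update_self, hnew, htt, one_mul]
    simp only [hX, mul_add, Finset.sum_add_distrib] at htX
    linarith

theorem IsInterpolating.hasBoundedGrammian {lam : ι → ℂ} (hlam : ∀ i, lam i ∈ ball (0 : ℂ) 1)
    (h : IsInterpolating (ball 0 1) lam) : HasBoundedGrammian lam := by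
  have hlam' : ∀ i, ‖lam i‖ < 1 := fun i ↦ mem_ball_zero_iff.mp (hlam i)
  obtain ⟨M, hM⟩ := h.exists_uniform_bound isOpen_ball hlam
  refine ⟨M ^ 2 + 1, by positivity, fun F a ↦ ?_⟩
  obtain ⟨s, hs, hsum⟩ := exists_sign_sum_mul_le_sum_diag
    (fun i j ↦ (a i * conj (a j) * szegoGrammian lam i j).re) F
  obtain ⟨φ, hd, hb, hφ⟩ := hM (fun i ↦ s i) fun i ↦ by
    rw [Complex.norm_real, Real.norm_eq_abs, hs]
  have hsigned : ‖sesqForm (szegoGrammian lam) F (fun i ↦ s i * a i) (fun i ↦ s i * a i)‖ ≤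
      ∑ i ∈ F, ‖a i‖ ^ 2 := by
    have hre := congrArg Complex.re
      (sesqForm_szegoGrammian_self_eq_norm hlam' F fun i ↦ s i * a i)
    rw [Complex.ofReal_re] at hre
    rw [← hre, sesqForm, Complex.re_sum]
    convert hsum using 2 with i _ i _
    · rw [Complex.re_sum]
      refine Finset.sum_congr rfl fun j _ ↦ ?_
      rw [← Complex.re_ofReal_mul, map_mul, Complex.conj_ofReal]
      congr 1
      push_cast
      ring
    · rw [szegoGrammian, szegoGram_self (hlam' i), mul_one, Complex.mul_conj', ← Complex.ofReal_pow,
        Complex.ofReal_re]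
  have hunsigned : (fun i ↦ φ (lam i) * (s i * a i)) = a := funext fun i ↦ by
    rw [hφ, ← mul_assoc, ← Complex.ofReal_mul, ← abs_mul_abs_self, hs, one_mul, Complex.ofReal_one,
      one_mul]
  have hpick := norm_sesqForm_szegoGrammian_le hlam' hd hb F fun i ↦ s i * a i
  rw [hunsigned] at hpick
  calc ‖sesqForm (szegoGrammian lam) F a a‖
      ≤ M ^ 2 * ∑ i ∈ F, ‖a i‖ ^ 2 := hpick.trans (by gcongr)
    _ ≤ (M ^ 2 + 1) * ∑ i ∈ F, ‖a i‖ ^ 2 := by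
        gcongr
        exact le_add_of_nonneg_right zero_le_one

end SignChoice

section RowBound

variable {ι : Type*} {G : ι → ι → ℂ} {M : ℝ} {F : Finset ι}

theorem sesqForm_add_sub_sesqForm_sub (G : ι → ι → ℂ) (F : Finset ι) (x y : ι → ℂ) :
    sesqForm G F (x + y) (x + y) - sesqForm G F (x - y) (x - y) =
      2 * (sesqForm G F x y + sesqForm G F y x) := by
  simp only [sesqForm, mul_add, Finset.mul_sum, ← Finset.sum_sub_distrib, ← Finset.sum_add_distrib]
  refine Finset.sum_congr rfl fun i _ ↦ Finset.sum_congr rfl fun j _ ↦ ?_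
  simp only [Pi.add_apply, Pi.sub_apply, map_add, map_sub]
  ring

theorem conj_sesqForm (hG : ∀ i j, conj (G i j) = G j i) (F : Finset ι) (x y : ι → ℂ) :
    conj (sesqForm G F x y) = sesqForm G F y x := by
  simp only [sesqForm, map_sum, map_mul, Complex.conj_conj, hG]
  rw [Finset.sum_comm]
  exact Finset.sum_congr rfl fun i _ ↦ Finset.sum_congr rfl fun j _ ↦ by ring

theorem re_sesqForm_le (hG : ∀ i j, conj (G i j) = G j i)
    (hM : ∀ a : ι → ℂ, ‖sesqForm G F a a‖ ≤ M * ∑ i ∈ F, ‖a i‖ ^ 2) (x y : ι → ℂ) :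
    2 * (sesqForm G F x y).re ≤ M * (∑ i ∈ F, ‖x i‖ ^ 2 + ∑ i ∈ F, ‖y i‖ ^ 2) := by
  have hpolar := congrArg Complex.re (sesqForm_add_sub_sesqForm_sub G F x y)
  rw [← conj_sesqForm hG F x y, Complex.add_conj, Complex.sub_re, ← Complex.ofReal_ofNat,
    ← Complex.ofReal_mul, Complex.ofReal_re] at hpolar
  have hparallelogram : ∑ i ∈ F, ‖(x + y) i‖ ^ 2 + ∑ i ∈ F, ‖(x - y) i‖ ^ 2 =
      2 * (∑ i ∈ F, ‖x i‖ ^ 2 + ∑ i ∈ F, ‖y i‖ ^ 2) := by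
    simp only [← Finset.sum_add_distrib, Finset.mul_sum]
    exact Finset.sum_congr rfl fun i _ ↦ parallelogram_law_with_norm ℝ (x i) (y i)
  have hadd := (Complex.re_le_norm _).trans (hM (x + y))
  have hsub := (Complex.abs_re_le_norm _).trans (hM (x - y))
  have hsum := congrArg (M * ·) hparallelogram
  linarith [neg_abs_le (sesqForm G F (x - y) (x - y)).re]

theorem sum_sq_norm_row_le (hG : ∀ i j, conj (G i j) = G j i) (hM0 : 0 < M)
    (hM : ∀ a : ι → ℂ, ‖sesqForm G F a a‖ ≤ M * ∑ i ∈ F, ‖a i‖ ^ 2) {i : ι} (hi : i ∈ F) :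
    ∑ j ∈ F, ‖G i j‖ ^ 2 ≤ M ^ 2 := by
  classical
  set R := ∑ j ∈ F, ‖G i j‖ ^ 2 with hR
  let y : ι → ℂ := fun j ↦ (M⁻¹ : ℝ) * G i j
  have hform : sesqForm G F (Pi.single i 1) y = (M⁻¹ * R : ℝ) := by
    rw [sesqForm, Finset.sum_eq_single_of_mem i hi fun k _ hk ↦ by simp [hk], hR]
    push_cast
    rw [Finset.mul_sum]
    refine Finset.sum_congr rfl fun j _ ↦ ?_
    rw [Pi.single_eq_same, one_mul, map_mul, Complex.conj_ofReal, mul_assoc, Complex.conj_mul']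
    push_cast
    rfl
  have hsingle : ∑ j ∈ F, ‖(Pi.single i 1 : ι → ℂ) j‖ ^ 2 = 1 := by
    rw [Finset.sum_eq_single_of_mem i hi fun k _ hk ↦ by simp [hk]]
    simp
  have hy : ∑ j ∈ F, ‖y j‖ ^ 2 = M⁻¹ ^ 2 * R := by
    rw [hR, Finset.mul_sum]
    refine Finset.sum_congr rfl fun j _ ↦ ?_
    rw [norm_mul, Complex.norm_real, mul_pow, Real.norm_eq_abs, sq_abs]
  have hle := re_sesqForm_le hG hM (Pi.single i 1) y
  rw [hform, Complex.ofReal_re, hsingle, hy] at hle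
  have hscale : M⁻¹ * R ≤ M := by
    have : M * (1 + M⁻¹ ^ 2 * R) = M + M⁻¹ * R := by field_simp
    linarith
  rw [sq]
  exact (inv_mul_le_iff₀ hM0).mp hscale

theorem exp_neg_sum_one_sub_sq_le_prod {x : ι → ℝ} {δ : ℝ} (hδ : 0 < δ)
    (hx : ∀ i ∈ F, δ ≤ x i) (hx1 : ∀ i ∈ F, x i ≤ 1) :
    Real.exp (-(∑ i ∈ F, (1 - x i ^ 2)) / (2 * δ ^ 2)) ≤ ∏ i ∈ F, x i := by
  have hterm : ∀ i ∈ F, -(1 - x i ^ 2) / (2 * δ ^ 2) ≤ Real.log (x i) := fun i hi ↦ by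
    have hxpos := hδ.trans_le (hx i hi)
    have hlog := Real.one_sub_inv_le_log_of_pos (pow_pos hxpos 2)
    rw [Real.log_pow] at hlog
    have hdiv : (1 - x i ^ 2) / x i ^ 2 ≤ (1 - x i ^ 2) / δ ^ 2 := by
      have := sub_nonneg.mpr (pow_le_one₀ hxpos.le (hx1 i hi) (n := 2))
      have := hx i hi
      gcongr
    have hinv : (1 - x i ^ 2) / x i ^ 2 = (x i ^ 2)⁻¹ - 1 := by field_simp
    have hhalf : -(1 - x i ^ 2) / (2 * δ ^ 2) = -((1 - x i ^ 2) / δ ^ 2) / 2 := by ring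
    push_cast at hlog
    linarith
  rw [← Finset.sum_neg_distrib, Finset.sum_div, Real.exp_sum]
  refine Finset.prod_le_prod (fun _ _ ↦ (Real.exp_pos _).le) fun i hi ↦ ?_
  exact (Real.le_log_iff_exp_le (hδ.trans_le (hx i hi))).mp (hterm i hi)

theorem WeaklySeparated.uniformlySeparated {lam : ι → ℂ} (hlam : ∀ i, lam i ∈ ball (0 : ℂ) 1)
    (hsep : WeaklySeparated lam) (hgram : HasBoundedGrammian lam) : UniformlySeparated lam := by
  classical
  have hlam' : ∀ i, ‖lam i‖ < 1 := fun i ↦ mem_ball_zero_iff.mp (hlam i)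
  obtain ⟨δ, hδ, hsep⟩ := hsep
  obtain ⟨M, hM0, hM⟩ := hgram
  refine ⟨Real.exp (-M ^ 2 / (2 * δ ^ 2)), Real.exp_pos _, fun i F hi ↦ ?_⟩
  have hrow : ∑ j ∈ F, (1 - pseudoHyp (lam i) (lam j) ^ 2) ≤ M ^ 2 :=
    calc ∑ j ∈ F, (1 - pseudoHyp (lam i) (lam j) ^ 2)
        = ∑ j ∈ F, ‖szegoGrammian lam i j‖ ^ 2 :=
          Finset.sum_congr rfl fun j _ ↦ (sq_norm_szegoGram_eq_one_sub (hlam' i) (hlam' j)).symm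
      _ ≤ ∑ j ∈ insert i F, ‖szegoGrammian lam i j‖ ^ 2 :=
          Finset.sum_le_sum_of_subset_of_nonneg (Finset.subset_insert i F) fun _ _ _ ↦ sq_nonneg _
      _ ≤ M ^ 2 := sum_sq_norm_row_le (fun i j ↦ conj_szegoGram (lam i) (lam j)) hM0
          (hM (insert i F)) (Finset.mem_insert_self i F)
  calc Real.exp (-M ^ 2 / (2 * δ ^ 2))
      ≤ Real.exp (-(∑ j ∈ F, (1 - pseudoHyp (lam i) (lam j) ^ 2)) / (2 * δ ^ 2)) := by gcongr
    _ ≤ ∏ j ∈ F, pseudoHyp (lam i) (lam j) := exp_neg_sum_one_sub_sq_le_prod hδ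
        (fun j hj ↦ hsep i j (ne_of_mem_of_not_mem hj hi).symm)
        fun j _ ↦ (pseudoHyp_lt_one (hlam' i) (hlam' j)).le

end RowBound

theorem carleson_interpolation_general {ι : Type*} (lam : ι → ℂ)
    (hlam : ∀ i, lam i ∈ ball (0 : ℂ) 1) :
    [UniformlySeparated lam, IsInterpolating (ball 0 1) lam,
      WeaklySeparated lam ∧ HasBoundedGrammian lam].TFAE := by
  tfae_have 1 → 2 := fun h ↦ h.isInterpolating hlam
  tfae_have 2 → 3 := fun h ↦
    ⟨(h.uniformlySeparated hlam).weaklySeparated, h.hasBoundedGrammian hlam⟩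
  tfae_have 3 → 1 := fun h ↦ h.1.uniformlySeparated hlam h.2
  tfae_finish

/-- **Carleson's interpolation theorem.** For a sequence of distinct points `{λᵢ} ⊆ 𝔻`
the following are equivalent: (1) `∏_{j ≠ i} ρ(λᵢ, λⱼ) ≥ ε > 0` uniformly in `i`
(expressed via all finite partial products); (2) the sequence is interpolating for
`H^∞(𝔻)`; (3) the sequence is weakly separated and the Szegő Grammian
`Gᵢⱼ = (1-|λᵢ|²)^{1/2}(1-|λⱼ|²)^{1/2}/(1-λᵢλ̄ⱼ)` is bounded on `ℓ²`. -/
theorem carleson_interpolation (lam : ℕ → ℂ)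
    (hlam : ∀ i, lam i ∈ ball (0 : ℂ) 1) (hdist : Function.Injective lam) :
    ((∃ ε > (0:ℝ), ∀ i : ℕ, ∀ F : Finset ℕ, i ∉ F →
        ε ≤ ∏ j ∈ F, pseudoHyp (lam i) (lam j)) ↔
      (∀ w : ℕ → ℂ, (∃ Cw : ℝ, ∀ i, ‖w i‖ ≤ Cw) →
        ∃ φ : ℂ → ℂ, DifferentiableOn ℂ φ (ball (0 : ℂ) 1) ∧
          (∃ Cφ : ℝ, ∀ z ∈ ball (0 : ℂ) 1, ‖φ z‖ ≤ Cφ) ∧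
          ∀ i, φ (lam i) = w i)) ∧
    ((∀ w : ℕ → ℂ, (∃ Cw : ℝ, ∀ i, ‖w i‖ ≤ Cw) →
        ∃ φ : ℂ → ℂ, DifferentiableOn ℂ φ (ball (0 : ℂ) 1) ∧
          (∃ Cφ : ℝ, ∀ z ∈ ball (0 : ℂ) 1, ‖φ z‖ ≤ Cφ) ∧
          ∀ i, φ (lam i) = w i) ↔
      ((∃ ε > (0:ℝ), ∀ i j : ℕ, i ≠ j → ε ≤ pseudoHyp (lam i) (lam j)) ∧
        ∃ M > (0:ℝ), ∀ (F : Finset ℕ) (a : ℕ → ℂ),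
          ‖∑ i ∈ F, ∑ j ∈ F, a i * starRingEnd ℂ (a j) *
              ((Real.sqrt (1 - ‖lam i‖ ^ 2) * Real.sqrt (1 - ‖lam j‖ ^ 2) : ℝ) /
                (1 - lam i * starRingEnd ℂ (lam j)))‖ ≤
            M * ∑ i ∈ F, ‖a i‖ ^ 2)) := by
  have h := carleson_interpolation_general lam hlam
  exact ⟨h.out 0 1, h.out 1 2⟩
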